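/- Let n, p ∈ ℕ with n ≥ 2 and p ≥ 2, and let A₁, A₂, …, A_p be n×n complex matrices having n−1 common rows or n−1 common columns (i.e. there exists an index k such that all rows with index ≠ k, or all columns with index ≠ k, coincide across the family). Assume there exists a ℂ-subspace W of ℂⁿ with 0 < dim W < n such that A_i W ⊆ W for every i ∈ {1,…,p}. Then ⋂_{i=1}^{p} spec(A_i) ≠ ∅, i.e. there exists λ ∈ ℂ which is an eigenvalue of every A_i. -/

import Mathlib

/-- `μ ∈ ℂ` is an eigenvalue of the matrix `A`, for the standard action on `ℂⁿ`. -/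
def HasEigen {n : ℕ} (A : Matrix (Fin n) (Fin n) ℂ) (μ : ℂ) : Prop :=
  ∃ v : Fin n → ℂ, v ≠ 0 ∧ A.mulVec v = μ • v

/-!
Any two of the matrices differ by an operator `g` of rank at most one, and either all these `g` have
their range in one line `L`, or they all vanish on one hyperplane `H`. If `W ≠ 0` is a proper
subspace invariant under each `g`, then either each `g` vanishes on `W` or each `g` maps the whole
space into `W`: a line `L` lies in `W` or meets it trivially, and dually `H` contains `W` or spans
the whole space together with it. So the matrices all induce the same operator on `W`, or they all
induce the same operator on the quotient by `W`; an eigenvalue of that operator is one of each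
matrix.
-/

open Module.End

section Semiring

variable {R V : Type*} [Semiring R] [AddCommMonoid V] [Module R V]
  {g : Module.End R V} {W U : Submodule R V}

theorem le_ker_of_range_le_of_disjoint (hgW : W ∈ g.invtSubmodule) (hgU : g.range ≤ U)
    (hUW : Disjoint U W) : W ≤ g.ker := fun w hw =>
  (Submodule.disjoint_def.mp hUW) (g w) (hgU ⟨w, rfl⟩) (hgW hw)

theorem range_le_of_le_ker_of_codisjoint (hgW : W ∈ g.invtSubmodule) (hgU : U ≤ g.ker)
    (hUW : Codisjoint U W) : g.range ≤ W :=
  calc g.range = U.map g ⊔ W.map g := by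
        rw [← Submodule.map_sup, hUW.eq_top, LinearMap.range_eq_map]
    _ = W.map g := by rw [LinearMap.le_ker_iff_map.mp hgU, bot_sup_eq]
    _ ≤ W := (mem_invtSubmodule_iff_map_le g).mp hgW

theorem forall_le_ker_or_forall_range_le {ι : Type*} {g : ι → Module.End R V}
    (hgW : ∀ i, W ∈ (g i).invtSubmodule)
    (hg : (∃ L, IsAtom L ∧ ∀ i, (g i).range ≤ L) ∨ ∃ H, IsCoatom H ∧ ∀ i, H ≤ (g i).ker) :
    (∀ i, W ≤ (g i).ker) ∨ ∀ i, (g i).range ≤ W := by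
  rcases hg with ⟨L, hL, hgL⟩ | ⟨H, hH, hgH⟩
  · by_cases hLW : L ≤ W
    · exact .inr fun i => (hgL i).trans hLW
    · exact .inl fun i =>
        le_ker_of_range_le_of_disjoint (hgW i) (hgL i) (hL.not_le_iff_disjoint.mp hLW)
  · by_cases hWH : W ≤ H
    · exact .inl fun i => hWH.trans (hgH i)
    · exact .inr fun i =>
        range_le_of_le_ker_of_codisjoint (hgW i) (hgH i) (hH.not_le_iff_codisjoint.mp hWH)

end Semiring

theorem hasEigenvalue_of_restrict {R V : Type*} [CommRing R] [AddCommGroup V] [Module R V]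
    {f : Module.End R V} {W : Submodule R V} {hW : ∀ w ∈ W, f w ∈ W} {μ : R}
    (hμ : HasEigenvalue (f.restrict hW) μ) : f.HasEigenvalue μ := by
  obtain ⟨w, hw⟩ := hμ.exists_hasEigenvector
  refine hasEigenvalue_of_hasEigenvector (x := (w : V)) ⟨?_, fun h => hw.2 (Subtype.ext h)⟩
  exact mem_eigenspace_iff.mpr (congrArg Subtype.val hw.apply_eq_smul)

section Field

variable {K V : Type*} [Field K] [AddCommGroup V] [Module K V] {W : Submodule K V}

theorem hasEigenvalue_of_mapQ [FiniteDimensional K V] {f : Module.End K V} {hW : W ≤ W.comap f}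
    {μ : K} (hμ : HasEigenvalue (W.mapQ W f hW) μ) : f.HasEigenvalue μ := by
  rw [hasEigenvalue_iff_mem_spectrum, spectrum.mem_iff, Module.End.isUnit_iff] at hμ ⊢
  contrapose! hμ
  -- Surjectivity passes to the quotient, whereas injectivity does not.
  have hsurj : Function.Surjective (algebraMap K (Module.End K (V ⧸ W)) μ - W.mapQ W f hW) := by
    refine W.mkQ_surjective.forall.mpr fun v => ?_
    obtain ⟨u, rfl⟩ := hμ.surjective v
    exact ⟨W.mkQ u, by simp⟩
  exact ⟨LinearMap.injective_iff_surjective.mpr hsurj, hsurj⟩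

variable [IsAlgClosed K] {g : Module.End K V}

theorem exists_forall_hasEigenvalue_of_le_ker_sub [FiniteDimensional K W] (hbot : W ≠ ⊥)
    (hgW : W ∈ g.invtSubmodule) :
    ∃ μ, ∀ f : Module.End K V, W ≤ (f - g).ker → f.HasEigenvalue μ := by
  have : Nontrivial W := Submodule.nontrivial_iff_ne_bot.mpr hbot
  obtain ⟨μ, hμ⟩ := exists_eigenvalue (g.restrict hgW)
  refine ⟨μ, fun f hf => ?_⟩
  have hfg : ∀ w ∈ W, f w = g w := fun w hw => sub_eq_zero.mp (hf hw)
  have hfW : ∀ w ∈ W, f w ∈ W := fun w hw => hfg w hw ▸ hgW hw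
  have hrestrict : f.restrict hfW = g.restrict hgW :=
    LinearMap.ext fun w => Subtype.ext (hfg w w.2)
  exact hasEigenvalue_of_restrict (hrestrict ▸ hμ)

theorem exists_forall_hasEigenvalue_of_range_sub_le [FiniteDimensional K V] (htop : W ≠ ⊤)
    (hgW : W ∈ g.invtSubmodule) :
    ∃ μ, ∀ f : Module.End K V, (f - g).range ≤ W → f.HasEigenvalue μ := by
  have : Nontrivial (V ⧸ W) := Submodule.Quotient.nontrivial_iff.mpr htop
  obtain ⟨μ, hμ⟩ := exists_eigenvalue (W.mapQ W g hgW)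
  refine ⟨μ, fun f hf => ?_⟩
  have hfg : ∀ v, f v - g v ∈ W := fun v => hf ⟨v, rfl⟩
  have hfW : W ≤ W.comap f := fun w hw => (W.sub_mem_iff_left (hgW hw)).mp (hfg w)
  have hmapQ : W.mapQ W f hfW = W.mapQ W g hgW :=
    W.linearMap_qext (LinearMap.ext fun v => (Submodule.Quotient.eq W).mpr (hfg v))
  exact hasEigenvalue_of_mapQ (hmapQ ▸ hμ)

theorem exists_forall_hasEigenvalue_of_range_sub_le_isAtom_or_isCoatom_le_ker_sub
    [FiniteDimensional K V] {ι : Type*} {f : ι → Module.End K V}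
    (hf : (∃ L, IsAtom L ∧ ∀ i j, (f i - f j).range ≤ L) ∨
      ∃ H, IsCoatom H ∧ ∀ i j, H ≤ (f i - f j).ker)
    (hbot : W ≠ ⊥) (htop : W ≠ ⊤) (hW : ∀ i, W ∈ (f i).invtSubmodule) :
    ∃ μ, ∀ i, (f i).HasEigenvalue μ := by
  rcases isEmpty_or_nonempty ι with _ | ⟨⟨j⟩⟩
  · exact ⟨0, isEmptyElim⟩
  have hdiff : ∀ i, W ∈ (f i - f j).invtSubmodule := fun i w hw =>
    W.sub_mem (hW i hw) (hW j hw)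
  have hj : (∃ L, IsAtom L ∧ ∀ i, (f i - f j).range ≤ L) ∨
      ∃ H, IsCoatom H ∧ ∀ i, H ≤ (f i - f j).ker :=
    hf.imp (fun ⟨L, hL, h⟩ => ⟨L, hL, fun i => h i j⟩) fun ⟨H, hH, h⟩ => ⟨H, hH, fun i => h i j⟩
  rcases forall_le_ker_or_forall_range_le hdiff hj with hker | hrange
  · obtain ⟨μ, hμ⟩ := exists_forall_hasEigenvalue_of_le_ker_sub hbot (hW j)
    exact ⟨μ, fun i => hμ (f i) (hker i)⟩
  · obtain ⟨μ, hμ⟩ := exists_forall_hasEigenvalue_of_range_sub_le htop (hW j)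
    exact ⟨μ, fun i => hμ (f i) (hrange i)⟩

end Field

section Matrix

variable {R m n : Type*} [CommRing R] [Fintype n] [DecidableEq n]

theorem range_toLin'_sub_le_span_single [DecidableEq m] {A B : Matrix m n R} {k : m}
    (h : ∀ l, l ≠ k → ∀ j, A l j = B l j) :
    (A.toLin' - B.toLin').range ≤ R ∙ (Pi.single k 1 : m → R) := by
  rintro _ ⟨v, rfl⟩
  refine Submodule.mem_span_singleton.mpr ⟨(A.toLin' - B.toLin') v k, funext fun l => ?_⟩
  rcases eq_or_ne l k with rfl | hl
  · simp
  · simp [hl, Matrix.mulVec, dotProduct, h l hl]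

theorem ker_proj_le_ker_toLin'_sub {A B : Matrix m n R} {k : n}
    (h : ∀ l, l ≠ k → ∀ j, A j l = B j l) :
    (LinearMap.proj k : (n → R) →ₗ[R] R).ker ≤ (A.toLin' - B.toLin').ker := by
  intro v hv
  have hvk : v k = 0 := hv
  refine sub_eq_zero.mpr (funext fun j => Finset.sum_congr rfl fun l _ => ?_)
  rcases eq_or_ne l k with rfl | hl
  · simp only [hvk, mul_zero]
  · simp only [h l hl j]

end Matrix

theorem hasEigen_iff_hasEigenvalue_toLin' {n : ℕ} {A : Matrix (Fin n) (Fin n) ℂ} {μ : ℂ} :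
    HasEigen A μ ↔ HasEigenvalue A.toLin' μ := by
  simp only [HasEigen, HasEigenvalue, HasUnifEigenvalue, Submodule.ne_bot_iff, mem_eigenspace_iff,
    Matrix.toLin'_apply, and_comm]

theorem levelt_stmt9_general {K ι n : Type*} [Field K] [IsAlgClosed K] [Fintype n] [DecidableEq n]
    (A : ι → Matrix n n K)
    (hcr : (∃ k, ∀ i i', ∀ l, l ≠ k → ∀ m, A i l m = A i' l m) ∨
      ∃ k, ∀ i i', ∀ l, l ≠ k → ∀ m, A i m l = A i' m l)
    {W : Submodule K (n → K)} (hbot : W ≠ ⊥) (htop : W ≠ ⊤)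
    (hW : ∀ i, ∀ w ∈ W, (A i).mulVec w ∈ W) :
    ∃ μ, ∀ i, HasEigenvalue (A i).toLin' μ := by
  refine exists_forall_hasEigenvalue_of_range_sub_le_isAtom_or_isCoatom_le_ker_sub ?_
    hbot htop hW
  rcases hcr with ⟨k, hrows⟩ | ⟨k, hcols⟩
  · exact .inl ⟨K ∙ Pi.single k 1, nonzero_span_atom _ (by simp), fun i j =>
      range_toLin'_sub_le_span_single (hrows i j)⟩
  · exact .inr ⟨(LinearMap.proj k : (n → K) →ₗ[K] K).ker,
      LinearMap.isCoatom_ker_of_surjective (LinearMap.proj_surjective k), fun i j =>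
      ker_proj_le_ker_toLin'_sub (hcols i j)⟩

/-- If `A₁,…,A_p` (`n, p ≥ 2`) have `n−1` common rows or `n−1` common
columns, and stabilize a common nontrivial proper subspace of `ℂⁿ`, then they have a
common eigenvalue. -/
theorem levelt_stmt9 (n p : ℕ) (hn : 2 ≤ n) (hp : 2 ≤ p)
    (A : Fin p → Matrix (Fin n) (Fin n) ℂ)
    (hcr : (∃ k : Fin n, ∀ i i' : Fin p, ∀ l : Fin n, l ≠ k → ∀ m : Fin n,
              A i l m = A i' l m) ∨
           (∃ k : Fin n, ∀ i i' : Fin p, ∀ l : Fin n, l ≠ k → ∀ m : Fin n,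
              A i m l = A i' m l))
    (hW : ∃ W : Submodule ℂ (Fin n → ℂ), 0 < Module.finrank ℂ W ∧ Module.finrank ℂ W < n ∧
            ∀ i, ∀ w ∈ W, (A i).mulVec w ∈ W) :
    ∃ μ : ℂ, ∀ i, HasEigen (A i) μ := by
  obtain ⟨W, hpos, hlt, hinv⟩ := hW
  simpa only [hasEigen_iff_hasEigenvalue_toLin'] using levelt_stmt9_general A hcr
    (Submodule.one_le_finrank_iff.mp hpos) (by rintro rfl; simp at hlt) hinv
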